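/- arXiv:1402.6279 — 2 statements merged into one kernel-verified Lean document; each statement's English description precedes it below -/
import Mathlib

section
/- (Lemma 1) For every integer k ≥ 2: ∂ Tr(θΘ^{k−1}) = Tr(θ²Θ^{k−1}), and moreover Tr(θ²Θ^{k−1}) = ∂̄ ω_{k+1,k−2}, where ω_{k+1,k−2} = (1/(k+1)) Tr(θ(θ²Θ^{k−2} + Θθ²Θ^{k−3} + ⋯ + Θ^{k−3}θ²Θ + Θ^{k−2}θ²)) = (1/(k+1)) Σ_{i=0}^{k−2} Tr(θ Θ^i θ² Θ^{k−2−i}). -/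
/-- An abstract model of the Dolbeault double complex of `(p,q)`-forms on a complex
manifold: a bigraded associative `ℂ`-algebra `Ω = ⨁ Ω^{p,q}`, graded-commutative with
respect to total degree, with `ℂ`-linear operators `∂` (`pd`) and `∂̄` (`pdb`) of
bidegrees `(1,0)` and `(0,1)`, squaring to zero and anticommuting, satisfying the
graded Leibniz rule. -/
structure DolbeaultAlgebra (Ω : Type*) [Ring Ω] [Algebra ℂ Ω] where
  /-- the `ℂ`-subspace of elements of bidegree `(p,q)` -/
  deg : ℕ → ℕ → Submodule ℂ Ω
  one_mem : (1 : Ω) ∈ deg 0 0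
  mul_mem : ∀ {p q p' q'} {a b : Ω}, a ∈ deg p q → b ∈ deg p' q' →
    a * b ∈ deg (p + p') (q + q')
  gcomm : ∀ {p q p' q'} (a b : Ω), a ∈ deg p q → b ∈ deg p' q' →
    a * b = ((-1 : ℂ) ^ ((p + q) * (p' + q'))) • (b * a)
  /-- the operator `∂` -/
  pd : Ω →ₗ[ℂ] Ω
  /-- the operator `∂̄` -/
  pdb : Ω →ₗ[ℂ] Ω
  pd_mem : ∀ {p q} {a : Ω}, a ∈ deg p q → pd a ∈ deg (p + 1) q
  pdb_mem : ∀ {p q} {a : Ω}, a ∈ deg p q → pdb a ∈ deg p (q + 1)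
  pd_pd : ∀ a : Ω, pd (pd a) = 0
  pdb_pdb : ∀ a : Ω, pdb (pdb a) = 0
  pd_pdb : ∀ a : Ω, pd (pdb a) + pdb (pd a) = 0
  pd_leibniz : ∀ {p q} (a b : Ω), a ∈ deg p q →
    pd (a * b) = pd a * b + ((-1 : ℂ) ^ (p + q)) • (a * pd b)
  pdb_leibniz : ∀ {p q} (a b : Ω), a ∈ deg p q →
    pdb (a * b) = pdb a * b + ((-1 : ℂ) ^ (p + q)) • (a * pdb b)

namespace DolbeaultAlgebra

variable {Ω : Type*} [Ring Ω] [Algebra ℂ Ω] {r : ℕ}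

/-- the entrywise extension of `∂` to `r × r` matrices over `Ω` -/
def mpd (A : DolbeaultAlgebra Ω) (M : Matrix (Fin r) (Fin r) Ω) :
    Matrix (Fin r) (Fin r) Ω := M.map A.pd

/-- the entrywise extension of `∂̄` to `r × r` matrices over `Ω` -/
def mpdb (A : DolbeaultAlgebra Ω) (M : Matrix (Fin r) (Fin r) Ω) :
    Matrix (Fin r) (Fin r) Ω := M.map A.pdb

/-- the assertion that all entries of a matrix lie in `Ω^{p,q}` -/
def MatDeg (A : DolbeaultAlgebra Ω) (p q : ℕ) (M : Matrix (Fin r) (Fin r) Ω) : Prop :=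
  ∀ i j, M i j ∈ A.deg p q

end DolbeaultAlgebra

variable {Ω : Type*} [Ring Ω] [Algebra ℂ Ω]

namespace DolbeaultAlgebra

variable {r : ℕ}

theorem mpd_mul (A : DolbeaultAlgebra Ω) {p q : ℕ} {M : Matrix (Fin r) (Fin r) Ω}
    (hM : A.MatDeg p q M) (N : Matrix (Fin r) (Fin r) Ω) :
    A.mpd (M * N) = A.mpd M * N + ((-1 : ℂ) ^ (p + q)) • (M * A.mpd N) := by
  ext i j
  simp only [mpd, Matrix.map_apply, Matrix.mul_apply, Matrix.add_apply, Matrix.smul_apply,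
    map_sum, Finset.smul_sum, ← Finset.sum_add_distrib]
  exact Finset.sum_congr rfl fun x _ => A.pd_leibniz _ _ (hM i x)

theorem mpdb_mul (A : DolbeaultAlgebra Ω) {p q : ℕ} {M : Matrix (Fin r) (Fin r) Ω}
    (hM : A.MatDeg p q M) (N : Matrix (Fin r) (Fin r) Ω) :
    A.mpdb (M * N) = A.mpdb M * N + ((-1 : ℂ) ^ (p + q)) • (M * A.mpdb N) := by
  ext i j
  simp only [mpdb, Matrix.map_apply, Matrix.mul_apply, Matrix.add_apply, Matrix.smul_apply,
    map_sum, Finset.smul_sum, ← Finset.sum_add_distrib]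
  exact Finset.sum_congr rfl fun x _ => A.pdb_leibniz _ _ (hM i x)

theorem MatDeg.mul {A : DolbeaultAlgebra Ω} {p q p' q' : ℕ} {M N : Matrix (Fin r) (Fin r) Ω}
    (hM : A.MatDeg p q M) (hN : A.MatDeg p' q' N) : A.MatDeg (p + p') (q + q') (M * N) := by
  intro i j
  rw [Matrix.mul_apply]
  exact Submodule.sum_mem _ fun x _ => A.mul_mem (hM i x) (hN x j)

theorem MatDeg.one (A : DolbeaultAlgebra Ω) :
    A.MatDeg 0 0 (1 : Matrix (Fin r) (Fin r) Ω) := by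
  intro i j
  rw [Matrix.one_apply]
  split_ifs
  · exact A.one_mem
  · exact Submodule.zero_mem _

theorem MatDeg.pow {A : DolbeaultAlgebra Ω} {M : Matrix (Fin r) (Fin r) Ω}
    (hM : A.MatDeg 1 1 M) (n : ℕ) : A.MatDeg n n (M ^ n) := by
  induction n with
  | zero => simpa using MatDeg.one A
  | succ n ih => rw [pow_succ]; exact ih.mul hM

theorem trace_comm (A : DolbeaultAlgebra Ω) {p q p' q' : ℕ} {M N : Matrix (Fin r) (Fin r) Ω}
    (hM : A.MatDeg p q M) (hN : A.MatDeg p' q' N) :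
    Matrix.trace (M * N) = ((-1 : ℂ) ^ ((p + q) * (p' + q'))) • Matrix.trace (N * M) := by
  simp only [Matrix.trace, Matrix.diag_apply, Matrix.mul_apply, Finset.smul_sum]
  rw [Finset.sum_comm]
  exact Finset.sum_congr rfl fun x _ => Finset.sum_congr rfl fun y _ =>
    A.gcomm _ _ (hM y x) (hN x y)

theorem pd_trace (A : DolbeaultAlgebra Ω) (M : Matrix (Fin r) (Fin r) Ω) :
    A.pd (Matrix.trace M) = Matrix.trace (A.mpd M) := by
  simp [Matrix.trace, mpd]

theorem pdb_trace (A : DolbeaultAlgebra Ω) (M : Matrix (Fin r) (Fin r) Ω) :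
    A.pdb (Matrix.trace M) = Matrix.trace (A.mpdb M) := by
  simp [Matrix.trace, mpdb]

theorem pd_one (A : DolbeaultAlgebra Ω) : A.pd 1 = 0 := by
  have h := A.pd_leibniz 1 1 A.one_mem
  simpa using h

theorem pdb_one (A : DolbeaultAlgebra Ω) : A.pdb 1 = 0 := by
  have h := A.pdb_leibniz 1 1 A.one_mem
  simpa using h

theorem mpd_one (A : DolbeaultAlgebra Ω) : A.mpd (1 : Matrix (Fin r) (Fin r) Ω) = 0 := by
  ext i j
  simp only [mpd, Matrix.map_apply, Matrix.one_apply, Matrix.zero_apply]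
  split_ifs <;> simp [pd_one]

theorem mpdb_one (A : DolbeaultAlgebra Ω) : A.mpdb (1 : Matrix (Fin r) (Fin r) Ω) = 0 := by
  ext i j
  simp only [mpdb, Matrix.map_apply, Matrix.one_apply, Matrix.zero_apply]
  split_ifs <;> simp [pdb_one]

theorem mpdb_mpdb (A : DolbeaultAlgebra Ω) (M : Matrix (Fin r) (Fin r) Ω) :
    A.mpdb (A.mpdb M) = 0 := by
  ext i j
  simp [mpdb, A.pdb_pdb]

theorem mpd_mpdb (A : DolbeaultAlgebra Ω) (M : Matrix (Fin r) (Fin r) Ω) :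
    A.mpd (A.mpdb M) = - A.mpdb (A.mpd M) := by
  ext i j
  simpa [mpdb, mpd] using eq_neg_of_add_eq_zero_left (A.pd_pdb (M i j))

theorem mpdb_neg (A : DolbeaultAlgebra Ω) (M : Matrix (Fin r) (Fin r) Ω) :
    A.mpdb (-M) = - A.mpdb M := by
  ext i j
  simp [mpdb]

theorem neg_one_pow_double (n : ℕ) : (-1 : ℂ) ^ (n + n) = 1 := Even.neg_one_pow ⟨n, rfl⟩

end DolbeaultAlgebra



/-- (Lemma 1) For every `k ≥ 2`: `∂Tr(θΘ^(k-1)) = Tr(θ²Θ^(k-1))`, and moreover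
`Tr(θ²Θ^(k-1)) = ∂̄ω`, where
`ω = (1/(k+1)) ∑_{i=0}^{k-2} Tr(θ Θ^i θ² Θ^(k-2-i))`. -/
theorem stmt2
    (A : DolbeaultAlgebra Ω) (r : ℕ) (hr : 1 ≤ r)
    (θ Θ : Matrix (Fin r) (Fin r) Ω)
    (hθdeg : A.MatDeg 1 0 θ) (hθpd : A.mpd θ = -(θ * θ)) (hΘ : Θ = A.mpdb θ)
    (k : ℕ) (hk : 2 ≤ k) :
    A.pd (Matrix.trace (θ * Θ ^ (k - 1))) = Matrix.trace (θ ^ 2 * Θ ^ (k - 1)) ∧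
    Matrix.trace (θ ^ 2 * Θ ^ (k - 1)) =
      A.pdb ((((k : ℂ) + 1)⁻¹) •
        ∑ i ∈ Finset.range (k - 1), Matrix.trace (θ * Θ ^ i * θ ^ 2 * Θ ^ (k - 2 - i))) := by
  obtain ⟨n, rfl⟩ : ∃ n, k = n + 2 := ⟨k - 2, by omega⟩
  have e1 : n + 2 - 1 = n + 1 := by omega
  have e2 : n + 2 - 2 = n := by omega
  rw [e1, e2]
  have hΘdeg : A.MatDeg 1 1 Θ := by
    intro i j
    rw [hΘ]
    exact A.pdb_mem (hθdeg i j)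
  have hpow := fun m => hΘdeg.pow m
  have hθ2 : A.MatDeg 2 0 (θ * θ) := hθdeg.mul hθdeg
  have hbθθ : A.mpdb (θ * θ) = Θ * θ - θ * Θ := by
    rw [A.mpdb_mul hθdeg, ← hΘ]
    simp [sub_eq_add_neg]
  have hdΘ : A.mpd Θ = Θ * θ - θ * Θ := by
    rw [hΘ, A.mpd_mpdb, hθpd, A.mpdb_neg, neg_neg, hbθθ, hΘ]
  have hbΘ : A.mpdb Θ = 0 := by rw [hΘ, A.mpdb_mpdb]
  have hdpow : ∀ m, A.mpd (Θ ^ m) = Θ ^ m * θ - θ * Θ ^ m := by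
    intro m
    induction m with
    | zero => simp [A.mpd_one]
    | succ m ih =>
      rw [pow_succ, A.mpd_mul (hpow m), DolbeaultAlgebra.neg_one_pow_double, one_smul, ih, hdΘ]
      noncomm_ring
  have hbpow : ∀ m, A.mpdb (Θ ^ m) = 0 := by
    intro m
    induction m with
    | zero => simp [A.mpdb_one]
    | succ m ih =>
      rw [pow_succ, A.mpdb_mul (hpow m), ih, hbΘ]
      simp
  have hflip : ∀ m, Matrix.trace (θ * Θ ^ m * θ) = - Matrix.trace (θ ^ 2 * Θ ^ m) := by
    intro m
    have h := A.trace_comm (hθdeg.mul (hpow m)) hθdeg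
    have hs : (-1 : ℂ) ^ ((1 + m + (0 + m)) * (1 + 0)) = -1 :=
      Odd.neg_one_pow ⟨m, by ring⟩
    rw [h, hs, neg_one_smul, pow_two, mul_assoc]
  refine ⟨?_, ?_⟩
  · rw [A.pd_trace, A.mpd_mul hθdeg, hθpd, hdpow]
    have h := hflip (n + 1)
    simp only [add_zero, pow_one, neg_one_smul, mul_sub, neg_mul, neg_sub, ← mul_assoc,
      Matrix.trace_add, Matrix.trace_sub, Matrix.trace_neg]
    rw [h, pow_two]
    abel
  · have hterm : ∀ i ∈ Finset.range (n + 1),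
        A.pdb (Matrix.trace (θ * Θ ^ i * θ ^ 2 * Θ ^ (n - i))) =
          Matrix.trace (θ ^ 2 * Θ ^ (n + 1)) +
          (Matrix.trace (θ * Θ ^ i * θ * Θ ^ (n + 1 - i)) -
           Matrix.trace (θ * Θ ^ (i + 1) * θ * Θ ^ (n + 1 - (i + 1)))) := by
      intro i hi
      obtain ⟨j, rfl⟩ : ∃ j, n = i + j := ⟨n - i, by have := Finset.mem_range.1 hi; omega⟩
      have a1 : i + j - i = j := by omega
      have a2 : i + j + 1 - i = j + 1 := by omega
      have a3 : i + j + 1 - (i + 1) = j := by omega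
      rw [a1, a2, a3, A.pdb_trace]
      have key : A.mpdb (θ * Θ ^ i * θ ^ 2 * Θ ^ j) =
          Θ ^ (i + 1) * (θ ^ 2 * Θ ^ j) + (θ * Θ ^ i * θ * Θ ^ (j + 1)
            - θ * Θ ^ (i + 1) * θ * Θ ^ j) := by
        have b1 : A.mpdb (θ ^ 2 * Θ ^ j) = (Θ * θ - θ * Θ) * Θ ^ j := by
          rw [pow_two, A.mpdb_mul hθ2, hbθθ, hbpow]
          simp
        have b2 : A.mpdb (Θ ^ i * (θ ^ 2 * Θ ^ j)) = Θ ^ i * ((Θ * θ - θ * Θ) * Θ ^ j) := by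
          rw [A.mpdb_mul (hpow i), hbpow, b1, DolbeaultAlgebra.neg_one_pow_double]
          simp
        have b3 : θ * Θ ^ i * θ ^ 2 * Θ ^ j = θ * (Θ ^ i * (θ ^ 2 * Θ ^ j)) := by
          simp only [mul_assoc]
        rw [b3, A.mpdb_mul hθdeg, b2, ← hΘ, pow_succ' Θ j, pow_succ Θ i]
        have c : Θ * (Θ ^ i * (θ ^ 2 * Θ ^ j)) = Θ ^ i * Θ * (θ ^ 2 * Θ ^ j) := by
          rw [← pow_succ Θ i, pow_succ' Θ i, mul_assoc]
        rw [c]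
        simp only [add_zero, pow_one, neg_one_smul, mul_sub, sub_mul, mul_assoc, neg_sub]
      rw [key, Matrix.trace_add, Matrix.trace_sub]
      congr 1
      have hd : A.MatDeg (2 + j) (0 + j) (θ ^ 2 * Θ ^ j) := by
        rw [pow_two]; exact hθ2.mul (hpow j)
      rw [A.trace_comm (hpow (i + 1)) hd]
      have hs : (-1 : ℂ) ^ ((i + 1 + (i + 1)) * (2 + j + (0 + j))) = 1 :=
        Even.neg_one_pow (Even.mul_right ⟨i + 1, rfl⟩ _)
      rw [hs, one_smul, mul_assoc, ← pow_add]
      congr 3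
      ring
    rw [map_smul, map_sum, Finset.sum_congr rfl hterm, Finset.sum_add_distrib,
      Finset.sum_range_sub' (fun i => Matrix.trace (θ * Θ ^ i * θ * Θ ^ (n + 1 - i)))]
    have hne : ((n + 2 : ℕ) : ℂ) + 1 ≠ 0 := by exact_mod_cast Nat.succ_ne_zero (n + 2)
    rw [eq_inv_smul_iff₀ hne]
    simp only [Finset.sum_const, Finset.card_range, pow_zero, mul_one, Nat.sub_zero,
      Nat.sub_self, hflip, ← pow_two, sub_neg_eq_add]
    rw [← Nat.cast_smul_eq_nsmul ℂ]
    push_cast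
    module
end

section
/- (Lemma 2) For every integer k ≥ 1 and every t ∈ ℂ, set F_k(t) = Tr(θ(Θ + tθ²)^{k−1}) and G_k(t) = Tr((Θ + tθ²)^k). Then ∂F_k(t) = Tr(θ²(Θ + tθ²)^{k−1}) and ∂̄F_k(t) − t ∂F_k(t) = G_k(t). -/
variable {Ω : Type*} [Ring Ω] [Algebra ℂ Ω]

theorem hmap_mul_odd {r : ℕ} (A : DolbeaultAlgebra Ω) (D : Ω →ₗ[ℂ] Ω)
    (hD : ∀ {p q} (a b : Ω), a ∈ A.deg p q →
      D (a * b) = D a * b + ((-1 : ℂ) ^ (p + q)) • (a * D b))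
    (M N : Matrix (Fin r) (Fin r) Ω) (hM : A.MatDeg 1 0 M) :
    (M * N).map D = M.map D * N - M * N.map D := by
  ext i j
  simp only [Matrix.map_apply, Matrix.mul_apply, Matrix.sub_apply, map_sum,
    ← Finset.sum_sub_distrib]
  refine Finset.sum_congr rfl fun x _ => ?_
  rw [hD _ _ (hM i x)]
  simp [sub_eq_add_neg]

theorem hmap_mul_even {r : ℕ} (A : DolbeaultAlgebra Ω) (D : Ω →ₗ[ℂ] Ω)
    (hD : ∀ {p q} (a b : Ω), a ∈ A.deg p q →
      D (a * b) = D a * b + ((-1 : ℂ) ^ (p + q)) • (a * D b))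
    (M N : Matrix (Fin r) (Fin r) Ω) (hM : A.MatDeg 1 1 M) :
    (M * N).map D = M.map D * N + M * N.map D := by
  ext i j
  simp only [Matrix.map_apply, Matrix.mul_apply, Matrix.add_apply, map_sum,
    ← Finset.sum_add_distrib]
  refine Finset.sum_congr rfl fun x _ => ?_
  rw [hD _ _ (hM i x)]
  simp

theorem hmap_lin {r : ℕ} (D : Ω →ₗ[ℂ] Ω) (M N : Matrix (Fin r) (Fin r) Ω) (t : ℂ) :
    (M + t • N).map D = M.map D + t • N.map D := by
  ext i j
  simp

/-- If `D X = c [X, θ]` and `D` is a derivation at `X`, then `D Xⁿ = c [Xⁿ, θ]`. -/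
theorem hmap_pow {r : ℕ} (A : DolbeaultAlgebra Ω) (D : Ω →ₗ[ℂ] Ω)
    (hD : ∀ {p q} (a b : Ω), a ∈ A.deg p q →
      D (a * b) = D a * b + ((-1 : ℂ) ^ (p + q)) • (a * D b))
    (θ Θ : Matrix (Fin r) (Fin r) Ω) (h1 : A.MatDeg 1 0 θ) (h2 : A.MatDeg 1 1 Θ) (t c : ℂ)
    (hX : (Θ + t • (θ * θ)).map D
      = c • ((Θ + t • (θ * θ)) * θ - θ * (Θ + t • (θ * θ)))) (n : ℕ) :
    ((Θ + t • (θ * θ)) ^ n).map D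
      = c • ((Θ + t • (θ * θ)) ^ n * θ - θ * (Θ + t • (θ * θ)) ^ n) := by
  have key : ∀ N : Matrix (Fin r) (Fin r) Ω, ((Θ + t • (θ * θ)) * N).map D
      = (Θ + t • (θ * θ)).map D * N + (Θ + t • (θ * θ)) * N.map D := by
    intro N
    rw [add_mul, smul_mul_assoc, hmap_lin, hmap_lin, hmap_mul_even A D hD _ _ h2, mul_assoc θ θ N,
      hmap_mul_odd A D hD _ _ h1, hmap_mul_odd A D hD _ _ h1, hmap_mul_odd A D hD _ _ h1]
    simp only [add_mul, mul_sub, sub_mul, smul_mul_assoc, mul_assoc, smul_sub]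
    abel
  induction n with
  | zero =>
    have h1 : D 1 = 0 := by
      have := hD 1 1 A.one_mem
      simpa using this
    ext i j
    by_cases h : i = j
    · simp [h, h1]
    · simp [h, Matrix.one_apply]
  | succ n ih =>
    rw [pow_succ', key, ih, hX]
    simp only [mul_sub, sub_mul, smul_mul_assoc, mul_smul_comm, mul_assoc, smul_sub]
    abel

theorem hpow_comm {r : ℕ} (S : Subring Ω) (X : Matrix (Fin r) (Fin r) Ω)
    (h : ∀ i j, X i j ∈ S) (n : ℕ) : ∀ i j, (X ^ n) i j ∈ S := by
  induction n with
  | zero =>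
    intro i j
    rw [pow_zero, Matrix.one_apply]
    split_ifs
    · exact S.one_mem
    · exact S.zero_mem
  | succ n ih =>
    intro i j
    rw [pow_succ, Matrix.mul_apply]
    exact S.sum_mem fun x _ => S.mul_mem (ih _ _) (h _ _)

theorem htrace_map {r : ℕ} (D : Ω →ₗ[ℂ] Ω) (M : Matrix (Fin r) (Fin r) Ω) :
    D (Matrix.trace M) = Matrix.trace (M.map D) := by
  simp [Matrix.trace, map_sum]

theorem htrace_cyc {r : ℕ} (A : DolbeaultAlgebra Ω) (θ Y : Matrix (Fin r) (Fin r) Ω)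
    (h1 : A.MatDeg 1 0 θ) (hY : ∀ i j, ∀ b ∈ A.deg 1 0, b * Y i j = Y i j * b) :
    Matrix.trace (θ * Y * θ) = - Matrix.trace (θ * θ * Y) := by
  have e1 : Matrix.trace (θ * θ * Y) = Matrix.trace (Y * (θ * θ)) := by
    simp only [Matrix.trace, Matrix.diag, Matrix.mul_apply, Finset.sum_mul, Finset.mul_sum]
    rw [Finset.sum_comm]
    refine Finset.sum_congr rfl fun i _ => Finset.sum_congr rfl fun j _ =>
      Finset.sum_congr rfl fun k _ => ?_
    rw [mul_assoc, hY _ _ _ (h1 _ _), ← mul_assoc, hY _ _ _ (h1 _ _), mul_assoc]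
  have e2 : Matrix.trace (θ * Y * θ) = - Matrix.trace (Y * θ * θ) := by
    rw [mul_assoc]
    simp only [Matrix.trace, Matrix.diag]
    simp only [Matrix.mul_apply (M := θ) (N := Y * θ), Matrix.mul_apply (M := Y * θ) (N := θ)]
    rw [Finset.sum_comm, ← Finset.sum_neg_distrib]
    refine Finset.sum_congr rfl fun i _ => ?_
    rw [← Finset.sum_neg_distrib]
    refine Finset.sum_congr rfl fun j _ => ?_
    rw [Matrix.mul_apply, Finset.mul_sum, Finset.sum_mul, ← Finset.sum_neg_distrib]
    refine Finset.sum_congr rfl fun k _ => ?_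
    rw [← mul_assoc, hY _ _ _ (h1 _ _), mul_assoc, A.gcomm _ _ (h1 j i) (h1 k j)]
    simp [mul_assoc]
  rw [e2, e1, mul_assoc]

/-- (Lemma 2) For every `k ≥ 1` and `t ∈ ℂ`, with `F k t = Tr(θ(Θ + tθ²)^(k-1))` and
`G k t = Tr((Θ + tθ²)ᵏ)`: `∂(F k t) = Tr(θ²(Θ + tθ²)^(k-1))` and
`∂̄(F k t) - t∂(F k t) = G k t`. -/
theorem stmt4
    (A : DolbeaultAlgebra Ω) (r : ℕ) (hr : 1 ≤ r)
    (θ Θ : Matrix (Fin r) (Fin r) Ω)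
    (hθdeg : A.MatDeg 1 0 θ) (hθpd : A.mpd θ = -(θ * θ)) (hΘ : Θ = A.mpdb θ)
    (t : ℂ) (k : ℕ) (hk : 1 ≤ k) :
    A.pd (Matrix.trace (θ * (Θ + t • (θ * θ)) ^ (k - 1))) =
      Matrix.trace (θ ^ 2 * (Θ + t • (θ * θ)) ^ (k - 1)) ∧
    A.pdb (Matrix.trace (θ * (Θ + t • (θ * θ)) ^ (k - 1)))
      - t • A.pd (Matrix.trace (θ * (Θ + t • (θ * θ)) ^ (k - 1))) =
      Matrix.trace ((Θ + t • (θ * θ)) ^ k) := by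
  obtain ⟨n, rfl⟩ : ∃ n, k = n + 1 := ⟨k - 1, by omega⟩
  rw [Nat.add_sub_cancel]
  have hθ1 : θ.map A.pd = -(θ * θ) := hθpd
  have hθ2 : θ.map A.pdb = Θ := hΘ.symm
  have hΘdeg : A.MatDeg 1 1 Θ := by
    intro i j
    rw [hΘ]
    exact A.pdb_mem (hθdeg i j)
  have hsq1 : (θ * θ).map A.pd = 0 := by
    rw [hmap_mul_odd A A.pd A.pd_leibniz _ _ hθdeg, hθ1]
    simp [mul_assoc]
  have hsq2 : (θ * θ).map A.pdb = Θ * θ - θ * Θ := by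
    rw [hmap_mul_odd A A.pdb A.pdb_leibniz _ _ hθdeg, hθ2]
  have hΘ2 : Θ.map A.pdb = 0 := by
    rw [← hθ2]
    ext i j
    simp [A.pdb_pdb]
  have hΘ1 : Θ.map A.pd = Θ * θ - θ * Θ := by
    rw [← hsq2, ← neg_neg (θ * θ), ← hθ1, ← hθ2]
    ext i j
    simp only [Matrix.map_apply, Matrix.neg_apply, map_neg]
    exact eq_neg_of_add_eq_zero_left (A.pd_pdb _)
  have hX1 := hmap_pow A A.pd A.pd_leibniz θ Θ hθdeg hΘdeg t 1 (by
    rw [hmap_lin, hΘ1, hsq1]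
    simp only [add_mul, mul_add, smul_mul_assoc, mul_smul_comm, mul_assoc, one_smul, smul_zero]
    abel) n
  have hX2 := hmap_pow A A.pdb A.pdb_leibniz θ Θ hθdeg hΘdeg t t (by
    rw [hmap_lin, hΘ2, hsq2]
    simp only [add_mul, mul_add, smul_mul_assoc, mul_smul_comm, mul_assoc]
    congr 1
    abel_nf) n
  have hY : ∀ i j, ∀ b ∈ A.deg 1 0, b * ((Θ + t • (θ * θ)) ^ n) i j
      = ((Θ + t • (θ * θ)) ^ n) i j * b := by
    intro i j
    have := hpow_comm (Subring.centralizer (A.deg 1 0 : Set Ω)) (Θ + t • (θ * θ)) (by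
      intro i j
      rw [Subring.mem_centralizer_iff]
      intro b hb
      have e1 : b * Θ i j = Θ i j * b := by
        rw [A.gcomm _ _ hb (hΘdeg i j)]
        simp
      have e2 : b * (θ * θ) i j = (θ * θ) i j * b := by
        rw [Matrix.mul_apply, Finset.mul_sum, Finset.sum_mul]
        refine Finset.sum_congr rfl fun x _ => ?_
        rw [A.gcomm _ _ hb (A.mul_mem (hθdeg i x) (hθdeg x j))]
        simp
      simp only [Matrix.add_apply, Matrix.smul_apply, mul_add, add_mul, e1, mul_smul_comm, e2,
        smul_mul_assoc]) n i j
    exact Subring.mem_centralizer_iff.mp this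
  have hcyc := htrace_cyc A θ _ hθdeg hY
  have hP : A.pd (Matrix.trace (θ * (Θ + t • (θ * θ)) ^ n))
      = - Matrix.trace (θ * (Θ + t • (θ * θ)) ^ n * θ) := by
    rw [htrace_map, hmap_mul_odd A A.pd A.pd_leibniz _ _ hθdeg, hX1, hθ1, ← Matrix.trace_neg]
    congr 1
    simp only [mul_sub, one_smul, neg_mul, mul_assoc]
    abel
  refine ⟨by rw [hP, hcyc, neg_neg, pow_two], ?_⟩
  rw [hP, htrace_map, hmap_mul_odd A A.pdb A.pdb_leibniz _ _ hθdeg, hX2, hθ2, ← Matrix.trace_neg,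
    ← Matrix.trace_smul, ← Matrix.trace_sub, pow_succ']
  congr 1
  generalize hZ : (Θ + t • (θ * θ)) ^ n = Z
  simp only [mul_sub, add_mul, mul_smul_comm, smul_mul_assoc, smul_sub, smul_neg, mul_assoc]
  abel
end
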